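/- Let 𝒲 : (a,b) → Matrix N N ℂ be twice differentiable and Hermitian-valued with finite moments (the interval (a,b) bounded or unbounded). Let 𝒟(y) = y''ℱ₂ + y'ℱ₁ + yℱ₀ be a second order differential operator whose coefficients ℱ₂, ℱ₁, ℱ₀ are matrix-valued rational functions without poles in (a,b), and let 𝔸 be a linear subspace of matrix polynomials such that 𝒟(P) is a matrix polynomial for every P ∈ 𝔸. Assume the boundary conditions: for every n ≥ 0, lim_{t→a⁺} tⁿℱ₂(t)𝒲(t) = 0, lim_{t→b⁻} tⁿℱ₂(t)𝒲(t) = 0, lim_{t→a⁺} tⁿ[(ℱ₂𝒲)'(t) − ℱ₁(t)𝒲(t)] = 0 and lim_{t→b⁻} tⁿ[(ℱ₂𝒲)'(t) − ℱ₁(t)𝒲(t)] = 0; and assume on (a,b): ℱ₂𝒲 = 𝒲ℱ₂*, 2(ℱ₂𝒲)' = 𝒲ℱ₁* + ℱ₁𝒲, and (ℱ₂𝒲)'' − (ℱ₁𝒲)' + ℱ₀𝒲 = 𝒲ℱ₀*. Then 𝒟 is symmetric with respect to the pair (𝒲,𝔸): ∫_a^b 𝒟(P)𝒲Q* dt = ∫_a^b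 P𝒲(𝒟(Q))* dt for all P,Q ∈ 𝔸. -/

import Mathlib

/-!
The symmetry is Green's (Lagrange's) identity. With `A = ℱ₂𝒲` and `B = ℱ₁𝒲`, the three symmetry
equations turn `𝒟(P)𝒲Q* - P𝒲(𝒟(Q))*` into the derivative of the bilinear concomitant
`P'AQ* - PAQ'* - P(A' - B)Q*` (`lagrange_identity`, `hasMatDerivAt_concomitant`). Every entry of the
concomitant is a combination of `tⁿ A` and `tⁿ (A' - B)`, so it vanishes at both ends of `(a,b)` by
the boundary conditions. Both integrands are integrable because `𝒟(P)` and `𝒟(Q)` are polynomials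
and `𝒲` has finite moments, so the fundamental theorem of calculus (`integral_eq_zero_of_ends`)
gives that the integral of the difference is zero.
-/

open MeasureTheory Filter Polynomial Matrix

noncomputable section

abbrev Mat (N : ℕ) := Matrix (Fin N) (Fin N) ℂ

abbrev MatPoly (N : ℕ) := Matrix (Fin N) (Fin N) (Polynomial ℂ)

def mpEval {N : ℕ} (P : MatPoly N) (t : ℝ) : Mat N :=
  Matrix.of fun i j => (P i j).eval (t : ℂ)

def mpDeriv {N : ℕ} (P : MatPoly N) : MatPoly N :=
  Matrix.of fun i j => derivative (P i j)

def matDeriv {N : ℕ} (f : ℝ → Mat N) : ℝ → Mat N :=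
  fun t => Matrix.of fun i j => deriv (fun s => f s i j) t

/-- a scalar function is a rational function with no poles in `S` -/
def IsRatOn (S : Set ℝ) (f : ℝ → ℂ) : Prop :=
  ∃ p q : Polynomial ℂ, ∀ t ∈ S,
    q.eval (t : ℂ) ≠ 0 ∧ f t = p.eval (t : ℂ) / q.eval (t : ℂ)

/-- `𝒟(y) = y''ℱ₂ + y'ℱ₁ + yℱ₀` applied to a matrix polynomial, as a function. -/
def DF {N : ℕ} (F₂ F₁ F₀ : ℝ → Mat N) (P : MatPoly N) (t : ℝ) : Mat N :=
  mpEval (mpDeriv (mpDeriv P)) t * F₂ t + mpEval (mpDeriv P) t * F₁ t + mpEval P t * F₀ t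

def leftEnd (a : EReal) : Filter ℝ :=
  comap (fun t : ℝ => (t : EReal)) (nhdsWithin a (Set.Ioi a))

def rightEnd (b : EReal) : Filter ℝ :=
  comap (fun t : ℝ => (t : EReal)) (nhdsWithin b (Set.Iio b))

/-! ### Polynomial multiples of a matrix function -/

/-- A polynomial multiple of `m` lies in any space of functions containing all `tⁿ m`. -/
lemma poly_mul_mem (V : Submodule ℂ (ℝ → ℂ)) {m : ℝ → ℂ}
    (hm : ∀ n : ℕ, (fun t : ℝ => (t : ℂ) ^ n * m t) ∈ V) (p : ℂ[X]) :
    (fun t : ℝ => p.eval (t : ℂ) * m t) ∈ V := by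
  have h : (fun t : ℝ => p.eval (t : ℂ) * m t)
      = ∑ n ∈ p.support, p.coeff n • (fun t : ℝ => (t : ℂ) ^ n * m t) := by
    funext t
    simp only [Polynomial.eval_eq_sum, Polynomial.sum, Finset.sum_mul, Finset.sum_apply,
      Pi.smul_apply, smul_eq_mul, mul_assoc]
  rw [h]
  exact V.sum_mem fun n _ => V.smul_mem _ (hm n)

/-- On the real line the conjugate of a polynomial function is a polynomial function. -/
lemma star_eval_ofReal (p : ℂ[X]) (t : ℝ) :
    star (p.eval (t : ℂ)) = (p.map (starRingEnd ℂ)).eval (t : ℂ) := by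
  have h := Polynomial.eval_map_apply (f := starRingEnd ℂ) (p := p) (t : ℂ)
  rw [Complex.conj_ofReal] at h
  exact h.symm

/-- Entries of `P M Q*` lie in any space of functions containing all `tⁿ M`. It is applied to the
integrable functions and to the functions vanishing at an end point. -/
lemma sandwich_mem {N : ℕ} (V : Submodule ℂ (ℝ → ℂ)) {M : ℝ → Mat N}
    (hM : ∀ (n : ℕ) (i j : Fin N), (fun t : ℝ => (t : ℂ) ^ n * M t i j) ∈ V)
    (P Q : MatPoly N) (i j : Fin N) :
    (fun t : ℝ => (mpEval P t * M t * (mpEval Q t)ᴴ) i j) ∈ V := by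
  have h : (fun t : ℝ => (mpEval P t * M t * (mpEval Q t)ᴴ) i j)
      = ∑ l, ∑ k, fun t : ℝ =>
          (P i k * (Q j l).map (starRingEnd ℂ)).eval (t : ℂ) * M t k l := by
    funext t
    simp only [Matrix.mul_apply, Finset.sum_apply, Finset.sum_mul, Matrix.conjTranspose_apply,
      mpEval, Matrix.of_apply, star_eval_ofReal, Polynomial.eval_mul]
    refine Finset.sum_congr rfl fun l _ => Finset.sum_congr rfl fun k _ => ?_
    ring
  rw [h]
  exact V.sum_mem fun l _ => V.sum_mem fun k _ => poly_mul_mem V (fun n => hM n k l) _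

/-- The functions vanishing along the filter `l`. -/
def vanishing (l : Filter ℝ) : Submodule ℂ (ℝ → ℂ) where
  carrier := {f | Tendsto f l (nhds 0)}
  add_mem' {f g} hf hg := by
    have h : Tendsto (fun t => f t + g t) l (nhds (0 + 0)) := Tendsto.add hf hg
    rwa [add_zero] at h
  zero_mem' := tendsto_const_nhds
  smul_mem' c f hf := by
    have h : Tendsto (fun t => c • f t) l (nhds (c • 0)) := Tendsto.const_smul hf c
    rwa [smul_zero] at h

/-- The functions integrable on `S`. -/
def integrableOnSubmodule (S : Set ℝ) : Submodule ℂ (ℝ → ℂ) where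
  carrier := {f | IntegrableOn f S volume}
  add_mem' hf hg := Integrable.add hf hg
  zero_mem' := integrable_zero _ _ _
  smul_mem' c _ hf := Integrable.smul c hf

/-! ### Entrywise differentiation -/

/-- Entrywise differentiability, which avoids choosing a norm on matrices. -/
def HasMatDerivAt {N : ℕ} (f : ℝ → Mat N) (f' : Mat N) (t : ℝ) : Prop :=
  ∀ i j, HasDerivAt (fun s => f s i j) (f' i j) t

section HasMatDerivAt

variable {N : ℕ} {f g : ℝ → Mat N} {f' g' : Mat N} {t : ℝ}

lemma HasMatDerivAt.mul (hf : HasMatDerivAt f f' t) (hg : HasMatDerivAt g g' t) :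
    HasMatDerivAt (fun s => f s * g s) (f' * g t + f t * g') t := by
  intro i j
  simp only [Matrix.mul_apply, Matrix.add_apply, ← Finset.sum_add_distrib]
  exact HasDerivAt.fun_sum fun k _ => (hf i k).mul (hg k j)

lemma HasMatDerivAt.add (hf : HasMatDerivAt f f' t) (hg : HasMatDerivAt g g' t) :
    HasMatDerivAt (fun s => f s + g s) (f' + g') t := fun i j => (hf i j).add (hg i j)

lemma HasMatDerivAt.sub (hf : HasMatDerivAt f f' t) (hg : HasMatDerivAt g g' t) :
    HasMatDerivAt (fun s => f s - g s) (f' - g') t := fun i j => (hf i j).sub (hg i j)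

lemma HasMatDerivAt.conjTranspose (hf : HasMatDerivAt f f' t) :
    HasMatDerivAt (fun s => (f s)ᴴ) f'ᴴ t := fun i j => (hf j i).star

lemma HasMatDerivAt.congr (hf : HasMatDerivAt f f' t) (h : ∀ᶠ s in nhds t, g s = f s) :
    HasMatDerivAt g f' t := fun i j =>
  (hf i j).congr_of_eventuallyEq (h.mono fun s hs => by simp only [hs])

lemma HasMatDerivAt.matDeriv_eq (hf : HasMatDerivAt f f' t) : matDeriv f t = f' := by
  ext i j
  exact (hf i j).deriv

lemma hasMatDerivAt_matDeriv (h : ∀ i j, DifferentiableAt ℝ (fun s => f s i j) t) :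
    HasMatDerivAt f (matDeriv f t) t := fun i j => (h i j).hasDerivAt

lemma hasMatDerivAt_mpEval (P : MatPoly N) (t : ℝ) :
    HasMatDerivAt (mpEval P) (mpEval (mpDeriv P) t) t := fun i j =>
  ((P i j).hasDerivAt (t : ℂ)).comp_ofReal

end HasMatDerivAt

/-- On an open set a pole-free rational function is differentiable, and its derivative is again
a pole-free rational function. -/
lemma IsRatOn.differentiable {S : Set ℝ} (hS : IsOpen S) {f : ℝ → ℂ} (hf : IsRatOn S f) :
    (∀ t ∈ S, DifferentiableAt ℝ f t) ∧ IsRatOn S (deriv f) := by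
  obtain ⟨p, q, h⟩ := hf
  have key : ∀ t ∈ S, HasDerivAt f
      (((derivative p).eval (t : ℂ) * q.eval (t : ℂ) - p.eval (t : ℂ) * (derivative q).eval (t : ℂ))
        / q.eval (t : ℂ) ^ 2) t := by
    intro t ht
    have h1 := ((p.hasDerivAt (t : ℂ)).comp_ofReal).div ((q.hasDerivAt (t : ℂ)).comp_ofReal)
      (h t ht).1
    refine h1.congr_of_eventuallyEq ?_
    filter_upwards [hS.mem_nhds ht] with s hs using (h s hs).2
  refine ⟨fun t ht => (key t ht).differentiableAt,
    derivative p * q - p * derivative q, q ^ 2, fun t ht => ⟨?_, ?_⟩⟩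
  · simpa using (h t ht).1
  · simp [(key t ht).deriv]

/-- If `F` is rational without poles and `W` is differentiable, so is `F W`. -/
lemma hasMatDerivAt_rat_mul {N : ℕ} {S : Set ℝ} (hS : IsOpen S) {F W : ℝ → Mat N}
    (hF : ∀ i j, IsRatOn S (fun t => F t i j))
    (hW : ∀ (i j : Fin N), ∀ t ∈ S, DifferentiableAt ℝ (fun s => W s i j) t) {t : ℝ}
    (ht : t ∈ S) :
    HasMatDerivAt (fun s => F s * W s) (matDeriv F t * W t + F t * matDeriv W t) t :=
  (hasMatDerivAt_matDeriv fun i j => ((hF i j).differentiable hS).1 t ht).mul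
    (hasMatDerivAt_matDeriv fun i j => hW i j t ht)

/-- If `F` is rational without poles and `W` is twice differentiable, then `(F W)'` is
differentiable. -/
lemma hasMatDerivAt_matDeriv_rat_mul {N : ℕ} {S : Set ℝ} (hS : IsOpen S) {F W : ℝ → Mat N}
    (hF : ∀ i j, IsRatOn S (fun t => F t i j))
    (hW : ∀ (i j : Fin N), ∀ t ∈ S, DifferentiableAt ℝ (fun s => W s i j) t)
    (hW' : ∀ (i j : Fin N), ∀ t ∈ S, DifferentiableAt ℝ (fun s => matDeriv W s i j) t) {t : ℝ}
    (ht : t ∈ S) :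
    HasMatDerivAt (matDeriv fun s => F s * W s) (matDeriv (matDeriv fun s => F s * W s) t) t := by
  have h1 := hasMatDerivAt_rat_mul hS (F := matDeriv F)
    (fun i j => ((hF i j).differentiable hS).2) hW ht
  have h2 := (h1.add (hasMatDerivAt_rat_mul hS hF hW' ht)).congr
    (g := matDeriv fun s => F s * W s) (by
      filter_upwards [hS.mem_nhds ht] with s hs
      exact (hasMatDerivAt_rat_mul hS hF hW hs).matDeriv_eq)
  rwa [h2.matDeriv_eq]

/-! ### The Lagrange identity -/

/-- The bilinear concomitant `P'AQ* - PAQ'* - PCQ*`, to be used with `C = A' - B`. -/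
def concomitant {N : ℕ} (A C : ℝ → Mat N) (P Q : MatPoly N) (t : ℝ) : Mat N :=
  mpEval (mpDeriv P) t * A t * (mpEval Q t)ᴴ - mpEval P t * A t * (mpEval (mpDeriv Q) t)ᴴ
    - mpEval P t * C t * (mpEval Q t)ᴴ

lemma hasMatDerivAt_sandwich {N : ℕ} {A : ℝ → Mat N} {A' : Mat N} {t : ℝ}
    (hA : HasMatDerivAt A A' t) (P Q : MatPoly N) :
    HasMatDerivAt (fun s => mpEval P s * A s * (mpEval Q s)ᴴ)
      ((mpEval (mpDeriv P) t * A t + mpEval P t * A') * (mpEval Q t)ᴴ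
        + mpEval P t * A t * (mpEval (mpDeriv Q) t)ᴴ) t :=
  ((hasMatDerivAt_mpEval P t).mul hA).mul (hasMatDerivAt_mpEval Q t).conjTranspose

lemma hasMatDerivAt_concomitant {N : ℕ} {A C : ℝ → Mat N} {A' C' : Mat N} {t : ℝ}
    (hA : HasMatDerivAt A A' t) (hC : HasMatDerivAt C C' t) (P Q : MatPoly N) :
    HasMatDerivAt (concomitant A C P Q)
      (mpEval (mpDeriv (mpDeriv P)) t * A t * (mpEval Q t)ᴴ
        + mpEval (mpDeriv P) t * (A' - C t) * (mpEval Q t)ᴴ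
        - mpEval P t * C' * (mpEval Q t)ᴴ
        - mpEval P t * (A' + C t) * (mpEval (mpDeriv Q) t)ᴴ
        - mpEval P t * A t * (mpEval (mpDeriv (mpDeriv Q)) t)ᴴ) t := by
  have h := ((hasMatDerivAt_sandwich hA (mpDeriv P) Q).sub
    (hasMatDerivAt_sandwich hA P (mpDeriv Q))).sub (hasMatDerivAt_sandwich hC P Q)
  convert (show HasMatDerivAt (concomitant A C P Q) _ t from h) using 1
  simp only [add_mul, mul_add, sub_mul, mul_sub]
  abel

/-- The pointwise Lagrange identity; `A₁`, `A₂` and `B₁` stand for `(ℱ₂𝒲)'`, `(ℱ₂𝒲)''` and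
`(ℱ₁𝒲)'`. -/
lemma lagrange_identity {N : ℕ} {F₂ F₁ F₀ W : ℝ → Mat N} {A₁ A₂ B₁ : Mat N} {t : ℝ}
    (h1 : F₂ t * W t = W t * (F₂ t)ᴴ)
    (h2 : (2 : ℂ) • A₁ = W t * (F₁ t)ᴴ + F₁ t * W t)
    (h3 : A₂ - B₁ + F₀ t * W t = W t * (F₀ t)ᴴ) (P Q : MatPoly N) :
    DF F₂ F₁ F₀ P t * W t * (mpEval Q t)ᴴ - mpEval P t * W t * (DF F₂ F₁ F₀ Q t)ᴴ
      = mpEval (mpDeriv (mpDeriv P)) t * (F₂ t * W t) * (mpEval Q t)ᴴ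
        + mpEval (mpDeriv P) t * (A₁ - (A₁ - F₁ t * W t)) * (mpEval Q t)ᴴ
        - mpEval P t * (A₂ - B₁) * (mpEval Q t)ᴴ
        - mpEval P t * (A₁ + (A₁ - F₁ t * W t)) * (mpEval (mpDeriv Q) t)ᴴ
        - mpEval P t * (F₂ t * W t) * (mpEval (mpDeriv (mpDeriv Q)) t)ᴴ := by
  have e2 : A₁ + (A₁ - F₁ t * W t) = W t * (F₁ t)ᴴ := by
    rw [← add_sub_assoc, ← two_smul ℂ A₁, h2, add_sub_cancel_right]
  have e3 : A₂ - B₁ = W t * (F₀ t)ᴴ - F₀ t * W t := by rw [← h3, add_sub_cancel_right]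
  -- Only the last occurrence of `ℱ₂𝒲` is to be moved to the other side of `𝒲`.
  have e1 : mpEval P t * (F₂ t * W t) * (mpEval (mpDeriv (mpDeriv Q)) t)ᴴ
      = mpEval P t * (W t * (F₂ t)ᴴ) * (mpEval (mpDeriv (mpDeriv Q)) t)ᴴ := by rw [h1]
  rw [e1, e2, e3]
  simp only [DF, Matrix.conjTranspose_add, Matrix.conjTranspose_mul]
  noncomm_ring

/-! ### The fundamental theorem of calculus on `(a,b)` -/

instance leftEnd_isCountablyGenerated (a : EReal) : (leftEnd a).IsCountablyGenerated := by
  unfold leftEnd; infer_instance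

instance rightEnd_isCountablyGenerated (b : EReal) : (rightEnd b).IsCountablyGenerated := by
  unfold rightEnd; infer_instance

lemma leftEnd_eventually {a c : EReal} (h : a < c) :
    ∀ᶠ t : ℝ in leftEnd a, a < (t : EReal) ∧ (t : EReal) < c :=
  tendsto_comap.eventually (Ioo_mem_nhdsGT h)

lemma rightEnd_eventually {b c : EReal} (h : c < b) :
    ∀ᶠ t : ℝ in rightEnd b, c < (t : EReal) ∧ (t : EReal) < b :=
  tendsto_comap.eventually (Ioo_mem_nhdsLT h)

lemma leftEnd_neBot {a b : EReal} (h : a < b) : (leftEnd a).NeBot := by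
  refine comap_neBot fun s hs => ?_
  obtain ⟨c, hc, hcs⟩ := (mem_nhdsGT_iff_exists_Ioo_subset' h).1 hs
  obtain ⟨x, hx1, hx2⟩ := EReal.lt_iff_exists_real_btwn.1 hc
  exact ⟨x, hcs ⟨hx1, hx2⟩⟩

lemma rightEnd_neBot {a b : EReal} (h : a < b) : (rightEnd b).NeBot := by
  refine comap_neBot fun s hs => ?_
  obtain ⟨c, hc, hcs⟩ := (mem_nhdsLT_iff_exists_Ioo_subset' h).1 hs
  obtain ⟨x, hx1, hx2⟩ := EReal.lt_iff_exists_real_btwn.1 hc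
  exact ⟨x, hcs ⟨hx1, hx2⟩⟩

/-- An integrable derivative of a function vanishing at both ends has integral zero, whether the
ends are finite or not. -/
lemma integral_eq_zero_of_ends {a b : EReal} (hab : a < b) {G g : ℝ → ℂ}
    (hG : ∀ t : ℝ, a < (t : EReal) ∧ (t : EReal) < b → HasDerivAt G (g t) t)
    (hg : IntegrableOn g {t : ℝ | a < (t : EReal) ∧ (t : EReal) < b})
    (hGa : Tendsto G (leftEnd a) (nhds 0)) (hGb : Tendsto G (rightEnd b) (nhds 0)) :
    ∫ t in {t : ℝ | a < (t : EReal) ∧ (t : EReal) < b}, g t = 0 := by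
  set S := {t : ℝ | a < (t : EReal) ∧ (t : EReal) < b} with hS
  have hSm : MeasurableSet S := by
    rw [hS]
    exact (measurableSet_Ioo (a := a) (b := b)).preimage measurable_coe_real_ereal
  have := leftEnd_neBot hab
  have := rightEnd_neBot hab
  -- The bounded subintervals `(x,y]` with `x → a` and `y → b` exhaust `(a,b)`.
  have hcov : AECover (volume.restrict S) (leftEnd a ×ˢ rightEnd b)
      (fun p : ℝ × ℝ => Set.Ioc p.1 p.2) := by
    refine ⟨?_, fun p => measurableSet_Ioc⟩
    refine (ae_restrict_iff' hSm).2 (ae_of_all _ fun t ht => ?_)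
    filter_upwards [(leftEnd_eventually ht.1).prod_mk (rightEnd_eventually ht.2)] with p hp
    exact ⟨EReal.coe_lt_coe_iff.1 hp.1.2, (EReal.coe_lt_coe_iff.1 hp.2.1).le⟩
  have hlim := hcov.integral_tendsto_of_countably_generated hg
  obtain ⟨c, hac, hcb⟩ := EReal.lt_iff_exists_real_btwn.1 hab
  have hzero : Tendsto (fun p : ℝ × ℝ => G p.2 - G p.1) (leftEnd a ×ˢ rightEnd b) (nhds 0) := by
    simpa using (hGb.comp tendsto_snd).sub (hGa.comp tendsto_fst)
  refine tendsto_nhds_unique hlim (hzero.congr' ?_)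
  filter_upwards [(leftEnd_eventually hac).prod_mk (rightEnd_eventually hcb)] with p hp
  have hle : p.1 ≤ p.2 :=
    (EReal.coe_lt_coe_iff.1 hp.1.2).le.trans (EReal.coe_lt_coe_iff.1 hp.2.1).le
  have hsub : Set.Icc p.1 p.2 ⊆ S := fun t ht =>
    ⟨hp.1.1.trans_le (EReal.coe_le_coe_iff.2 ht.1),
      (EReal.coe_le_coe_iff.2 ht.2).trans_lt hp.2.2⟩
  have hsubIoc : Set.Ioc p.1 p.2 ⊆ S := Set.Ioc_subset_Icc_self.trans hsub
  rw [Measure.restrict_restrict measurableSet_Ioc, Set.inter_eq_left.2 hsubIoc,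
    ← intervalIntegral.integral_of_le hle]
  refine (intervalIntegral.integral_eq_sub_of_hasDerivAt (fun t ht => hG t (hsub ?_)) ?_).symm
  · rwa [Set.uIcc_of_le hle] at ht
  · exact (intervalIntegrable_iff_integrableOn_Ioc_of_le hle).2 (hg.mono_set hsubIoc)

/-- A second order operator with matrix rational coefficients without
poles in `(a,b)`, satisfying the boundary conditions and the three symmetry equations with
respect to a twice differentiable Hermitian density `𝒲` with finite moments, is symmetric
with respect to the pair `(𝒲,𝔸)` whenever `𝒟` maps the subspace `𝔸` of matrix polynomials
into matrix polynomials. -/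
theorem rational_operator_symmetric_wrt_pair
    (N : ℕ) (a b : EReal) (hab : a < b)
    (S : Set ℝ) (hS : S = {t : ℝ | a < (t : EReal) ∧ (t : EReal) < b})
    (W : ℝ → Mat N)
    (hHerm : ∀ t ∈ S, (W t).IsHermitian)
    (hW1 : ∀ (i j : Fin N), ∀ t ∈ S, DifferentiableAt ℝ (fun s => W s i j) t)
    (hW2 : ∀ (i j : Fin N), ∀ t ∈ S, DifferentiableAt ℝ (fun s => matDeriv W s i j) t)
    (hMom : ∀ (n : ℕ) (i j : Fin N), IntegrableOn (fun t : ℝ => (t : ℂ) ^ n * W t i j) S)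
    (F₂ F₁ F₀ : ℝ → Mat N)
    (hrat2 : ∀ i j, IsRatOn S (fun t => F₂ t i j))
    (hrat1 : ∀ i j, IsRatOn S (fun t => F₁ t i j))
    (hrat0 : ∀ i j, IsRatOn S (fun t => F₀ t i j))
    (𝔸 : Submodule ℂ (MatPoly N))
    (hpoly : ∀ P ∈ 𝔸, ∃ Q : MatPoly N, ∀ t ∈ S, DF F₂ F₁ F₀ P t = mpEval Q t)
    (hbd1a : ∀ (n : ℕ) (i j : Fin N),
      Tendsto (fun t : ℝ => (t : ℂ) ^ n * (F₂ t * W t) i j) (leftEnd a) (nhds 0))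
    (hbd1b : ∀ (n : ℕ) (i j : Fin N),
      Tendsto (fun t : ℝ => (t : ℂ) ^ n * (F₂ t * W t) i j) (rightEnd b) (nhds 0))
    (hbd2a : ∀ (n : ℕ) (i j : Fin N),
      Tendsto (fun t : ℝ => (t : ℂ) ^ n *
        (matDeriv (fun s => F₂ s * W s) t - F₁ t * W t) i j) (leftEnd a) (nhds 0))
    (hbd2b : ∀ (n : ℕ) (i j : Fin N),
      Tendsto (fun t : ℝ => (t : ℂ) ^ n *
        (matDeriv (fun s => F₂ s * W s) t - F₁ t * W t) i j) (rightEnd b) (nhds 0))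
    (heq1 : ∀ t ∈ S, F₂ t * W t = W t * (F₂ t)ᴴ)
    (heq2 : ∀ t ∈ S, (2 : ℂ) • matDeriv (fun s => F₂ s * W s) t
        = W t * (F₁ t)ᴴ + F₁ t * W t)
    (heq3 : ∀ t ∈ S, matDeriv (matDeriv (fun s => F₂ s * W s)) t
        - matDeriv (fun s => F₁ s * W s) t + F₀ t * W t = W t * (F₀ t)ᴴ) :
    ∀ P ∈ 𝔸, ∀ Q ∈ 𝔸,
      (Matrix.of fun i j => ∫ t in S, (DF F₂ F₁ F₀ P t * W t * (mpEval Q t)ᴴ) i j)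
        = (Matrix.of fun i j => ∫ t in S, (mpEval P t * W t * (DF F₂ F₁ F₀ Q t)ᴴ) i j) := by
  intro P hP Q hQ
  have hSo : IsOpen S := by
    rw [hS]
    exact (isOpen_Ioo (a := a) (b := b)).preimage continuous_coe_real_ereal
  set A : ℝ → Mat N := fun s => F₂ s * W s with hA
  set C : ℝ → Mat N := fun s => matDeriv A s - F₁ s * W s with hC
  have hderiv : ∀ t ∈ S, HasMatDerivAt (concomitant A C P Q)
      (DF F₂ F₁ F₀ P t * W t * (mpEval Q t)ᴴ - mpEval P t * W t * (DF F₂ F₁ F₀ Q t)ᴴ) t := by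
    intro t ht
    have dA := hasMatDerivAt_rat_mul hSo hrat2 hW1 ht
    have dA2 := hasMatDerivAt_matDeriv_rat_mul hSo hrat2 hW1 hW2 ht
    have dB := hasMatDerivAt_rat_mul hSo hrat1 hW1 ht
    rw [← dA.matDeriv_eq] at dA
    rw [← dB.matDeriv_eq] at dB
    rw [lagrange_identity (heq1 t ht) (heq2 t ht) (heq3 t ht) P Q]
    exact hasMatDerivAt_concomitant dA (dA2.sub dB) P Q
  have hvan : ∀ l : Filter ℝ,
      (∀ (n : ℕ) (i j : Fin N), Tendsto (fun t : ℝ => (t : ℂ) ^ n * A t i j) l (nhds 0)) →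
      (∀ (n : ℕ) (i j : Fin N), Tendsto (fun t : ℝ => (t : ℂ) ^ n * C t i j) l (nhds 0)) →
      ∀ i j, Tendsto (fun t => concomitant A C P Q t i j) l (nhds 0) := fun l hlA hlC i j =>
    (vanishing l).sub_mem ((vanishing l).sub_mem
      (sandwich_mem (vanishing l) hlA (mpDeriv P) Q i j)
      (sandwich_mem (vanishing l) hlA P (mpDeriv Q) i j))
      (sandwich_mem (vanishing l) hlC P Q i j)
  obtain ⟨RP, hRP⟩ := hpoly P hP
  obtain ⟨RQ, hRQ⟩ := hpoly Q hQ
  ext i j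
  have hint1 : IntegrableOn (fun t => (DF F₂ F₁ F₀ P t * W t * (mpEval Q t)ᴴ) i j) S :=
    IntegrableOn.congr_fun (sandwich_mem (integrableOnSubmodule S) hMom RP Q i j)
      (fun t ht => by simp only [hRP t ht]) hSo.measurableSet
  have hint2 : IntegrableOn (fun t => (mpEval P t * W t * (DF F₂ F₁ F₀ Q t)ᴴ) i j) S :=
    IntegrableOn.congr_fun (sandwich_mem (integrableOnSubmodule S) hMom P RQ i j)
      (fun t ht => by simp only [hRQ t ht]) hSo.measurableSet
  rw [Matrix.of_apply, Matrix.of_apply, ← sub_eq_zero, ← integral_sub hint1 hint2]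
  subst hS
  exact integral_eq_zero_of_ends hab (fun t ht => hderiv t ht i j) (hint1.sub hint2)
    (hvan _ hbd1a hbd2a i j) (hvan _ hbd1b hbd2b i j)
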